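/- Let M = V ∪_S W be the standard genus three Heegaard splitting of the 3-torus, D = q({z = 1/2} ∩ C) ∩ V, E = q({z = 0} ∩ C) ∩ W, D′ = q({x = 1/2} ∩ C) ∩ V, and E′ = q({x = 0} ∩ C) ∩ W. Define C₀ to consist of (boundaries of) essential disks in V disjoint from E together with essential disks in W disjoint from D, and C₁ to consist of all remaining vertices of the disk complex D(S). Then D ∈ D_V(S) ∩ C₀ and E ∈ D_W(S) ∩ C₀ with D ∩ E = ∅, and D′ ∈ D_V(S) ∩ C₁ and E′ ∈ D_W(S) ∩ C₁ with D′ ∩ E′ = ∅. -/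

import Mathlib

/-!
In each circle factor `V` is governed by a short arc around `0` and `W` by the closed complementary
arc around `1`: a point lies in `V` (resp. `W`) when at least two of its coordinates lie in that
arc. Hence `D`, `E`, `D'` and `E'` are flat squares, and each is mapped homeomorphically to a square
in a 2-torus by a coordinate projection which sends `S` off the centre of that square. The boundary
of the square has winding number one about the centre, and this is invariant under isotopies of `S`.

So the disks are essential. The projection of `D'` sends all of `W` off the centre, so no isotopic
copy of `∂D'` bounds a disk in `W`. An isotopic copy of `∂D'` disjoint from `E` would let one
isotope `∂E` in `S` off the curve `S ∩ {x = 1/2} = ∂D'`; the projection of the resulting loop to the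
`xy`-torus then lifts to a plane loop missing a ray from the centre, so it does not wind about it, a
contradiction. Exchanging `V` and `W` gives the same for `E'`, whose boundary is `S ∩ {x = 0}`.
-/

open Set Metric Topology

noncomputable section

/-- The closed unit disk in the plane. -/
def Disk2 : Set (ℝ × ℝ) := Metric.closedBall 0 1

/-- The unit circle in the plane. -/
def Circle1 : Set (ℝ × ℝ) := Metric.sphere 0 1

variable {X : Type*} [TopologicalSpace X]

/-- `γ` is a simple closed curve (an embedded image of the unit circle). -/
def IsSCC (γ : Set X) : Prop :=
  ∃ f : (ℝ × ℝ) → X, ContinuousOn f Circle1 ∧ Set.InjOn f Circle1 ∧ f '' Circle1 = γ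

/-- The curve `γ` bounds an embedded disk contained in `A`. -/
def BoundsDiskIn (γ A : Set X) : Prop :=
  ∃ f : (ℝ × ℝ) → X, ContinuousOn f Disk2 ∧ Set.InjOn f Disk2 ∧
    f '' Disk2 ⊆ A ∧ f '' Circle1 = γ

/-- `Δ` is a properly embedded disk in `V` whose boundary lies on the surface `S`. -/
def IsProperDisk (Δ V S : Set X) : Prop :=
  ∃ f : (ℝ × ℝ) → X, ContinuousOn f Disk2 ∧ Set.InjOn f Disk2 ∧
    f '' Disk2 = Δ ∧ Δ ⊆ V ∧ f '' Circle1 = Δ ∩ S ∧ f '' (Disk2 \ Circle1) ⊆ V \ S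

/-- `Δ` is an essential disk in `V` (with `∂Δ = Δ ∩ S` an essential curve on `S`,
i.e. `∂Δ` bounds no disk in the surface `S`). -/
def IsEssentialDisk (Δ V S : Set X) : Prop :=
  IsProperDisk Δ V S ∧ ¬ BoundsDiskIn (Δ ∩ S) S

/-- `A` and `B` are ambiently isotopic by an isotopy of `X` preserving `V` setwise. -/
def AmbIsotopicIn (A B V : Set X) : Prop :=
  ∃ F : ℝ → X ≃ₜ X, Continuous (fun p : ℝ × X => F p.1 p.2) ∧
    F 0 = Homeomorph.refl X ∧ (∀ t, (F t) '' V = V) ∧ (F 1) '' A = B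

/-- The isotopy class of the curve `γ` bounds an essential disk in `V`
(i.e. `γ` is a vertex of the subcomplex `D_V(S)` of the disk complex). -/
def InDiskSet (γ V S : Set X) : Prop :=
  ∃ γ' Δ, AmbIsotopicIn γ γ' S ∧ IsEssentialDisk Δ V S ∧ Δ ∩ S = γ'

/-- `γ` represents a vertex of the disk complex `D(S)` of the splitting surface `S`
of `M = V ∪_S W` : an essential simple closed curve in `S` bounding an essential
disk in `V` or in `W` (up to isotopy). -/
def IsVertex (γ V W S : Set X) : Prop :=
  IsSCC γ ∧ γ ⊆ S ∧ ¬ BoundsDiskIn γ S ∧ (InDiskSet γ V S ∨ InDiskSet γ W S)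

/-- Chain of `n` pairwise tangent circles in the plane `z = 0` of `ℝ³`. -/
def chainCircles (n : ℕ) : Set ((ℝ × ℝ) × ℝ) :=
  ⋃ i ∈ Finset.range n, {p | (p.1.1 - 2 * i) ^ 2 + p.1.2 ^ 2 = 1 ∧ p.2 = 0}

/-- A standard model of the genus `n` handlebody in `ℝ³`: a closed regular
neighborhood of a wedge of `n` circles (a closed ball if `n = 0`). -/
def ModelHandlebody (n : ℕ) : Set ((ℝ × ℝ) × ℝ) :=
  if n = 0 then Metric.closedBall 0 1 else Metric.cthickening (1 / 4) (chainCircles n)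

/-- `A` is a handlebody of genus `n`. -/
def IsHandlebody (A : Set X) (n : ℕ) : Prop := Nonempty (A ≃ₜ ModelHandlebody n)

/-- The splitting surface `S` of `M = V ∪_S W` is critical: the vertices of the disk
complex `D(S)` can be partitioned into `C0` and `C1` such that (1) for each `i` there is
a pair of disjoint essential disks on the two sides with boundaries in `C i`, and (2)
a disk in `D_V(S) ∩ C i` and a disk in `D_W(S) ∩ C (1-i)` always intersect,
for any representatives. -/
def IsCriticalSurface (V W S : Set X) : Prop :=
  ∃ C0 C1 : Set (Set X),
    Disjoint C0 C1 ∧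
    (∀ γ, IsVertex γ V W S ↔ γ ∈ C0 ∪ C1) ∧
    (∃ ΔV ΔW, IsEssentialDisk ΔV V S ∧ IsEssentialDisk ΔW W S ∧
      (ΔV ∩ S) ∈ C0 ∧ (ΔW ∩ S) ∈ C0 ∧ Disjoint ΔV ΔW) ∧
    (∃ ΔV ΔW, IsEssentialDisk ΔV V S ∧ IsEssentialDisk ΔW W S ∧
      (ΔV ∩ S) ∈ C1 ∧ (ΔW ∩ S) ∈ C1 ∧ Disjoint ΔV ΔW) ∧
    (∀ γV γW, γV ∈ C0 → InDiskSet γV V S → γW ∈ C1 → InDiskSet γW W S →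
      ∀ γV' γW', AmbIsotopicIn γV γV' S → AmbIsotopicIn γW γW' S → ¬ Disjoint γV' γW') ∧
    (∀ γV γW, γV ∈ C1 → InDiskSet γV V S → γW ∈ C0 → InDiskSet γW W S →
      ∀ γV' γW', AmbIsotopicIn γV γV' S → AmbIsotopicIn γW γW' S → ¬ Disjoint γV' γW')


/-- The 3-torus, as the quotient `ℝ³/(2ℤ)³` (i.e. the cube `[-1,1]³` with opposite
faces identified). -/
abbrev T3 : Type := AddCircle (2 : ℝ) × AddCircle (2 : ℝ) × AddCircle (2 : ℝ)

/-- The quotient map `q : ℝ³ → T³` (restricting to the cube `C = [-1,1]³`, it is the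
map identifying the three pairs of opposite faces of `C`). -/
def qT : ℝ × ℝ × ℝ → T3 :=
  fun p => ((p.1 : AddCircle (2 : ℝ)), (p.2.1 : AddCircle (2 : ℝ)), (p.2.2 : AddCircle (2 : ℝ)))

/-- The cube `C = [-1,1]³`. -/
def Cube : Set (ℝ × ℝ × ℝ) :=
  {p | p.1 ∈ Icc (-1 : ℝ) 1 ∧ p.2.1 ∈ Icc (-1 : ℝ) 1 ∧ p.2.2 ∈ Icc (-1 : ℝ) 1}

/-- The union of the three coordinate axes of `ℝ³`. -/
def Axes : Set (ℝ × ℝ × ℝ) :=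
  {p | p.2.1 = 0 ∧ p.2.2 = 0} ∪ {p | p.1 = 0 ∧ p.2.2 = 0} ∪ {p | p.1 = 0 ∧ p.2.1 = 0}

/-- The genus three handlebody `V`: the image under `q` of a tubular neighborhood of
the union of the three axes in the cube. -/
def Vh : Set T3 := qT '' (Metric.cthickening (1 / 4) Axes ∩ Cube)

/-- The Heegaard surface `S = ∂V`. -/
def Sh : Set T3 := frontier Vh

/-- The complementary genus three handlebody `W = cl(M - V)`. -/
def Wh : Set T3 := closure Vhᶜ

/-- The meridian disk `D = q({z = 1/2} ∩ C) ∩ V` of `V`. -/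
def Dd : Set T3 := qT '' ({p | p.2.2 = 1 / 2} ∩ Cube) ∩ Vh

/-- The meridian disk `E = q({z = 0} ∩ C) ∩ W` of `W`. -/
def Ee : Set T3 := qT '' ({p | p.2.2 = 0} ∩ Cube) ∩ Wh

/-- The meridian disk `D' = q({x = 1/2} ∩ C) ∩ V` of `V`. -/
def Dd' : Set T3 := qT '' ({p | p.1 = 1 / 2} ∩ Cube) ∩ Vh

/-- The meridian disk `E' = q({x = 0} ∩ C) ∩ W` of `W`. -/
def Ee' : Set T3 := qT '' ({p | p.1 = 0} ∩ Cube) ∩ Wh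

/-- The isotopy class of `γ` contains the boundary of an essential disk in `V`
disjoint from `E` (i.e. the vertex `γ` lies in `C₀` via the `V`-side). -/
def VertexInC0V (γ : Set T3) : Prop :=
  ∃ γ' Δ, AmbIsotopicIn γ γ' Sh ∧ IsEssentialDisk Δ Vh Sh ∧ Δ ∩ Sh = γ' ∧ Disjoint Δ Ee

/-- The isotopy class of `γ` contains the boundary of an essential disk in `W`
disjoint from `D` (i.e. the vertex `γ` lies in `C₀` via the `W`-side). -/
def VertexInC0W (γ : Set T3) : Prop :=
  ∃ γ' Δ, AmbIsotopicIn γ γ' Sh ∧ IsEssentialDisk Δ Wh Sh ∧ Δ ∩ Sh = γ' ∧ Disjoint Δ Dd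

/-- The part `C₀` of the partition of the vertices of the disk complex `D(S)`:
essential disks in `V` disjoint from `E` together with essential disks in `W`
disjoint from `D`. -/
def C0set : Set (Set T3) := {γ | IsVertex γ Vh Wh Sh ∧ (VertexInC0V γ ∨ VertexInC0W γ)}

/-- The part `C₁` of the partition: all remaining vertices of `D(S)`. -/
def C1set : Set (Set T3) := {γ | IsVertex γ Vh Wh Sh ∧ ¬(VertexInC0V γ ∨ VertexInC0W γ)}

/-- The vertices of `D_V(S) ∩ C₀`. -/
def DVC0 : Set (Set T3) := {γ | γ ∈ C0set ∧ InDiskSet γ Vh Sh}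

/-- The vertices of `D_W(S) ∩ C₀`. -/
def DWC0 : Set (Set T3) := {γ | γ ∈ C0set ∧ InDiskSet γ Wh Sh}

/-- The vertices of `D_V(S) ∩ C₁`. -/
def DVC1 : Set (Set T3) := {γ | γ ∈ C1set ∧ InDiskSet γ Vh Sh}

/-- The vertices of `D_W(S) ∩ C₁`. -/
def DWC1 : Set (Set T3) := {γ | γ ∈ C1set ∧ InDiskSet γ Wh Sh}

section ContinuousLog

variable {A B : Type*} [TopologicalSpace A] [TopologicalSpace B]

/-- `g` has a continuous logarithm. For a nowhere vanishing loop `g` this says that its winding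
number about the origin is zero. -/
def HasContinuousLog (g : A → ℂ) : Prop :=
  ∃ l : C(A, ℂ), ∀ a, Complex.exp (l a) = g a

lemma HasContinuousLog.comp {g : A → ℂ} (hg : HasContinuousLog g) (f : C(B, A)) :
    HasContinuousLog (g ∘ f) :=
  let ⟨l, hl⟩ := hg
  ⟨l.comp f, fun b => hl (f b)⟩

lemma HasContinuousLog.of_pos_smul {g : A → ℂ} {ρ : A → ℝ} (hρ : Continuous ρ)
    (hpos : ∀ a, 0 < ρ a) (hg : HasContinuousLog fun a => ρ a • g a) : HasContinuousLog g := by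
  obtain ⟨l, hl⟩ := hg
  have hlog : Continuous fun a => Real.log (ρ a) := hρ.log fun a => (hpos a).ne'
  refine ⟨⟨fun a => l a - Real.log (ρ a), by fun_prop⟩, fun a => ?_⟩
  have hne : (ρ a : ℂ) ≠ 0 := by exact_mod_cast (hpos a).ne'
  simp only [ContinuousMap.coe_mk, Complex.exp_sub, hl]
  rw [← Complex.ofReal_exp, Real.exp_log (hpos a),
    Complex.real_smul, mul_div_cancel_left₀ _ hne]

lemma hasContinuousLog_of_mul_mem_slitPlane {g : A → ℂ} (hg : Continuous g) {u : ℂ}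
    (h : ∀ a, u * g a ∈ Complex.slitPlane) : HasContinuousLog g := by
  rcases eq_or_ne u 0 with rfl | hu
  · have : IsEmpty A := ⟨fun a => by simpa using h a⟩
    exact ⟨⟨fun _ => 0, continuous_const⟩, isEmptyElim⟩
  · refine ⟨⟨fun a => Complex.log (u * g a) - Complex.log u,
      ((continuous_const.mul hg).clog h).sub continuous_const⟩, fun a => ?_⟩
    rw [ContinuousMap.coe_mk, Complex.exp_sub, Complex.exp_log (Complex.slitPlane_ne_zero (h a)),
      Complex.exp_log hu, mul_div_cancel_left₀ _ hu]

lemma hasContinuousLog_of_homotopic {f₀ f₁ : C(A, {z : ℂ // z ≠ 0})} (h : f₀.Homotopic f₁)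
    (h₀ : HasContinuousLog fun a => (f₀ a : ℂ)) : HasContinuousLog fun a => (f₁ a : ℂ) := by
  obtain ⟨H⟩ := h
  obtain ⟨l, hl⟩ := h₀
  have hstart : ∀ a, H (0, a) = ⟨Complex.exp (l a), Complex.exp_ne_zero _⟩ := fun a =>
    (H.apply_zero a).trans (Subtype.ext (hl a).symm)
  let L := Complex.isCoveringMap_exp.liftHomotopy H.toContinuousMap l hstart
  have hL : ∀ x, Complex.exp (L x) = H x := fun x =>
    congrArg Subtype.val
      (congrFun (Complex.isCoveringMap_exp.liftHomotopy_lifts H.toContinuousMap l hstart) x)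
  exact ⟨L.comp ⟨fun a => (1, a), by fun_prop⟩, fun a => by simp [hL]⟩

lemma not_hasContinuousLog_coe_circle : ¬ HasContinuousLog fun w : Circle => (w : ℂ) := by
  rintro ⟨l, hl⟩
  -- both functions lift `Circle.exp` through `Complex.exp`, and they agree at `0`
  have hlift : (fun t : ℝ => l (Circle.exp t)) = fun t : ℝ => t * Complex.I + l 1 := by
    refine Complex.isCoveringMap_exp.eq_of_comp_eq (by fun_prop) (by fun_prop)
      (funext fun t => Subtype.ext ?_) 0 (by simp)
    simp [hl, Complex.exp_add]
  have h := congrFun hlift (2 * Real.pi)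
  simp [Circle.exp_two_pi, Real.pi_ne_zero] at h

lemma norm_equivRealProdCLM_pos (w : Circle) : 0 < ‖Complex.equivRealProdCLM w‖ :=
  norm_pos_iff.2 (EmbeddingLike.map_ne_zero_iff.2 w.coe_ne_zero)

/-- The radial map from the Euclidean unit circle to the unit circle `Circle1` of the sup norm. -/
def circleToCircle1 : C(Circle, Circle1) where
  toFun w := ⟨‖Complex.equivRealProdCLM w‖⁻¹ • Complex.equivRealProdCLM w, by
    rw [Circle1, mem_sphere_zero_iff_norm, norm_smul, norm_inv, norm_norm,
      inv_mul_cancel₀ (norm_equivRealProdCLM_pos w).ne']⟩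
  continuous_toFun := by
    have h : Continuous fun w : Circle => Complex.equivRealProdCLM w :=
      Complex.equivRealProdCLM.continuous.comp (by fun_prop)
    exact ((h.norm.inv₀ fun w => (norm_equivRealProdCLM_pos w).ne').smul h).subtype_mk _

lemma not_hasContinuousLog_smul_circle1 {r : ℝ} (hr : 0 < r) :
    ¬ HasContinuousLog fun x : Circle1 => Complex.equivRealProdCLM.symm (r • (x : ℝ × ℝ)) := by
  intro h
  have hcont : Continuous fun w : Circle => ‖Complex.equivRealProdCLM w‖ :=
    (Complex.equivRealProdCLM.continuous.comp (by fun_prop)).norm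
  refine not_hasContinuousLog_coe_circle (.of_pos_smul
    (ρ := fun w => r * ‖Complex.equivRealProdCLM w‖⁻¹)
    (continuous_const.mul (hcont.inv₀ fun w => (norm_equivRealProdCLM_pos w).ne'))
    (fun w => mul_pos hr (inv_pos.2 (norm_equivRealProdCLM_pos w))) ?_)
  convert h.comp circleToCircle1 using 2 with w
  simp only [Function.comp_apply, circleToCircle1, ContinuousMap.coe_mk, smul_smul, map_smul,
    ContinuousLinearEquiv.symm_apply_apply]

end ContinuousLog

section AddCircle

variable {p : ℝ}

lemma dist_coe_addCircle {x c : ℝ} (hp : 0 < p) (h : dist x c ≤ p / 2) :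
    dist (x : AddCircle p) c = dist x c := by
  rw [dist_eq_norm, ← AddCircle.coe_sub, Real.dist_eq]
  exact (AddCircle.norm_coe_eq_abs_iff p hp.ne').2 (by rwa [abs_of_pos hp])

lemma exists_coe_addCircle_eq_dist_eq (c : ℝ) (y : AddCircle p) :
    ∃ x : ℝ, (x : AddCircle p) = y ∧ dist x c = dist y c := by
  obtain ⟨x, rfl⟩ := QuotientAddGroup.mk_surjective y
  refine ⟨x - round (p⁻¹ * (x - c)) * p, ?_, ?_⟩
  · rw [AddCircle.coe_sub, ← zsmul_eq_mul, AddCircle.coe_zsmul, AddCircle.coe_period, smul_zero,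
      sub_zero]
  · change _ = dist (x : AddCircle p) c
    rw [dist_eq_norm (x : AddCircle p), ← AddCircle.coe_sub, AddCircle.norm_eq, Real.dist_eq]
    ring_nf

lemma coe_addCircle_eq_coe_iff_of_dist_lt {x y : ℝ} (h : dist x y < p) :
    (x : AddCircle p) = y ↔ x = y := by
  have hp : Fact (0 < p) := ⟨dist_nonneg.trans_lt h⟩
  rw [Real.dist_eq, abs_lt] at h
  rcases le_total x y with hxy | hxy
  · exact AddCircle.coe_eq_coe_iff_of_mem_Ico (a := x) ⟨le_rfl, by linarith [hp.out]⟩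
      ⟨hxy, by linarith⟩
  · exact AddCircle.coe_eq_coe_iff_of_mem_Ico (a := y) ⟨hxy, by linarith⟩
      ⟨le_rfl, by linarith [hp.out]⟩

lemma dist_half_period (hp : 0 < p) (y : AddCircle p) :
    dist y ((p / 2 : ℝ) : AddCircle p) = p / 2 - ‖y‖ := by
  obtain ⟨x, rfl, hx⟩ := exists_coe_addCircle_eq_dist_eq 0 y
  have hnorm : ‖(x : AddCircle p)‖ = |x| := by simpa using hx.symm
  have hle : |x| ≤ p / 2 := by
    simpa only [hnorm, abs_of_pos hp] using
      AddCircle.norm_le_half_period p (x := (x : AddCircle p)) hp.ne'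
  rw [hnorm]
  rcases abs_cases x with ⟨habs, hx0⟩ | ⟨habs, hx0⟩
  · rw [dist_coe_addCircle hp] <;> rw [Real.dist_eq, abs_of_nonpos] <;> linarith
  · have hshift : (x : AddCircle p) = ((x + p : ℝ) : AddCircle p) := by simp
    rw [hshift, dist_coe_addCircle hp] <;> rw [Real.dist_eq, abs_of_nonneg] <;> linarith

lemma closure_ball_addCircle (c : ℝ) {r : ℝ} (hr : r ≠ 0) :
    closure (ball (c : AddCircle p) r) = closedBall (c : AddCircle p) r := by
  refine closure_ball_subset_closedBall.antisymm fun y hy => ?_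
  obtain ⟨x, rfl, hx⟩ := exists_coe_addCircle_eq_dist_eq c y
  have hmem : x ∈ closure (ball c r) := by rwa [closure_ball c hr, mem_closedBall, hx]
  refine map_mem_closure (AddCircle.continuous_mk' p) hmem fun t ht => ?_
  have hle : dist (t : AddCircle p) c ≤ dist t c := by
    rw [dist_eq_norm, ← AddCircle.coe_sub, dist_eq_norm]
    exact QuotientAddGroup.norm_mk_le_norm
  exact hle.trans_lt ht

end AddCircle

section Torus

variable {p : ℝ}

/-- The universal covering of the flat torus `ℝ²/(pℤ)²`. -/
def toTorus (p : ℝ) : C(ℝ × ℝ, AddCircle p × AddCircle p) where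
  toFun x := (x.1, x.2)
  continuous_toFun :=
    ((AddCircle.continuous_mk' p).comp continuous_fst).prodMk
      ((AddCircle.continuous_mk' p).comp continuous_snd)

lemma exists_lift_toTorus {A : Type*} [TopologicalSpace A]
    (H : C(unitInterval × A, AddCircle p × AddCircle p)) (e : C(A, ℝ × ℝ))
    (he : ∀ a, H (0, a) = toTorus p (e a)) :
    ∃ H' : C(unitInterval × A, ℝ × ℝ), (∀ x, toTorus p (H' x) = H x) ∧ ∀ a, H' (0, a) = e a := by
  have cov := AddCircle.isCoveringMap_coe p
  let H₁ := ContinuousMap.fst.comp H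
  let H₂ := ContinuousMap.snd.comp H
  have h₁ : ∀ a, H₁ (0, a) = ((ContinuousMap.fst.comp e) a : AddCircle p) := fun a =>
    congrArg Prod.fst (he a)
  have h₂ : ∀ a, H₂ (0, a) = ((ContinuousMap.snd.comp e) a : AddCircle p) := fun a =>
    congrArg Prod.snd (he a)
  exact ⟨(cov.liftHomotopy H₁ _ h₁).prodMk (cov.liftHomotopy H₂ _ h₂),
    fun x => Prod.ext (congrFun (cov.liftHomotopy_lifts H₁ _ h₁) x)
      (congrFun (cov.liftHomotopy_lifts H₂ _ h₂) x),
    fun a => Prod.ext (cov.liftHomotopy_zero H₁ _ h₁ a) (cov.liftHomotopy_zero H₂ _ h₂ a)⟩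

/-- The square of side `2r` centred at `c`, projected to the torus `ℝ²/(pℤ)²` and parametrized by
the sup-norm unit disk `Disk2`. -/
def flatSquare (p : ℝ) (c : ℝ × ℝ) (r : ℝ) : C(ℝ × ℝ, AddCircle p × AddCircle p) :=
  (toTorus p).comp ⟨fun x => c + r • x, by fun_prop⟩

lemma dist_flatSquare {c x : ℝ × ℝ} {r : ℝ} (hr : 0 < r) (hp : r * ‖x‖ ≤ p / 2) :
    dist (flatSquare p c r x) (toTorus p c) = r * ‖x‖ := by
  rcases eq_or_ne x 0 with rfl | hx
  · simp [flatSquare]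
  have hdist : dist (c + r • x) c = r * ‖x‖ := by
    rw [dist_self_add_left, norm_smul, Real.norm_of_nonneg hr.le]
  have hp0 : 0 < p := by linarith [mul_pos hr (norm_pos_iff.2 hx)]
  have hle := hdist.trans_le hp
  rw [Prod.dist_eq, max_le_iff] at hle
  rw [← hdist, Prod.dist_eq, Prod.dist_eq]
  exact congrArg₂ max (dist_coe_addCircle hp0 hle.1) (dist_coe_addCircle hp0 hle.2)

lemma exists_flatSquare_eq (c : ℝ × ℝ) {r : ℝ} (hr : 0 < r) (y : AddCircle p × AddCircle p) :
    ∃ x, flatSquare p c r x = y ∧ r * ‖x‖ = dist y (toTorus p c) := by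
  obtain ⟨x₁, h₁, hd₁⟩ := exists_coe_addCircle_eq_dist_eq c.1 y.1
  obtain ⟨x₂, h₂, hd₂⟩ := exists_coe_addCircle_eq_dist_eq c.2 y.2
  have hsmul : c + r • r⁻¹ • ((x₁, x₂) - c) = (x₁, x₂) := by
    rw [smul_inv_smul₀ hr.ne', add_sub_cancel]
  refine ⟨r⁻¹ • ((x₁, x₂) - c), ?_, ?_⟩
  · change toTorus p (c + r • r⁻¹ • ((x₁, x₂) - c)) = y
    rw [hsmul]
    exact Prod.ext h₁ h₂
  · rw [norm_smul, norm_inv, Real.norm_of_nonneg hr.le, mul_inv_cancel_left₀ hr.ne',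
      ← dist_eq_norm, Prod.dist_eq]
    exact congrArg₂ max hd₁ hd₂

lemma flatSquare_image_disk2 (c : ℝ × ℝ) {r : ℝ} (hr : 0 < r) (hp : r ≤ p / 2) :
    flatSquare p c r '' Disk2 = closedBall (toTorus p c) r := by
  ext y
  simp only [Disk2, mem_image, mem_closedBall, dist_zero_right]
  constructor
  · rintro ⟨x, hx, rfl⟩
    have hle : r * ‖x‖ ≤ r := mul_le_of_le_one_right hr.le hx
    rwa [dist_flatSquare hr (hle.trans hp)]
  · intro hy
    obtain ⟨x, rfl, hx⟩ := exists_flatSquare_eq c hr y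
    exact ⟨x, le_of_mul_le_mul_left (by linarith) hr, rfl⟩

lemma flatSquare_image_circle1 (c : ℝ × ℝ) {r : ℝ} (hr : 0 < r) (hp : r ≤ p / 2) :
    flatSquare p c r '' Circle1 = sphere (toTorus p c) r := by
  ext y
  simp only [Circle1, mem_image, mem_sphere, dist_zero_right]
  constructor
  · rintro ⟨x, hx, rfl⟩
    rw [dist_flatSquare hr (by rwa [hx, mul_one]), hx, mul_one]
  · intro hy
    obtain ⟨x, rfl, hx⟩ := exists_flatSquare_eq c hr y
    exact ⟨x, mul_left_cancel₀ hr.ne' (by linarith), rfl⟩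

lemma flatSquare_injOn_disk2 (c : ℝ × ℝ) {r : ℝ} (hr : 0 < r) (hp : r < p / 2) :
    InjOn (flatSquare p c r) Disk2 := by
  intro x hx y hy hxy
  have hdist : dist (c + r • x) (c + r • y) < p := by
    rw [dist_add_left, dist_smul₀, Real.norm_of_nonneg hr.le]
    have := dist_triangle_right x y 0
    rw [Disk2, mem_closedBall] at hx hy
    nlinarith
  rw [Prod.dist_eq, max_lt_iff] at hdist
  have heq : c + r • x = c + r • y :=
    Prod.ext ((coe_addCircle_eq_coe_iff_of_dist_lt hdist.1).1 (congrArg Prod.fst hxy))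
      ((coe_addCircle_eq_coe_iff_of_dist_lt hdist.2).1 (congrArg Prod.snd hxy))
  exact smul_right_injective _ hr.ne' (add_left_cancel heq)

end Torus

section Encircles

variable {p : ℝ} {A Y : Type*} [TopologicalSpace A] [TopologicalSpace Y]

/-- The map `k` to the torus has a lift `e` to the plane such that `e - c` has no continuous
logarithm. For a loop avoiding the image of `c` this says that `e` has nonzero winding number
about `c`. -/
def Encircles (c : ℝ × ℝ) (k : A → AddCircle p × AddCircle p) : Prop :=
  ∃ e : C(A, ℝ × ℝ), (∀ a, toTorus p (e a) = k a) ∧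
    ¬ HasContinuousLog fun a => Complex.equivRealProdCLM.symm (e a - c)

lemma encircles_flatSquare (c : ℝ × ℝ) {r : ℝ} (hr : 0 < r) :
    Encircles c fun x : Circle1 => flatSquare p c r x :=
  ⟨⟨fun x => c + r • (x : ℝ × ℝ), by fun_prop⟩, fun _ => rfl, by
    simpa only [ContinuousMap.coe_mk, add_sub_cancel_left] using
      not_hasContinuousLog_smul_circle1 hr⟩

lemma Encircles.of_homotopic {c : ℝ × ℝ} {φ : C(Y, AddCircle p × AddCircle p)}
    (hφ : ∀ y, φ y ≠ toTorus p c) {k₀ k₁ : C(A, Y)} (hk : k₀.Homotopic k₁)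
    (h : Encircles c (φ ∘ k₀)) : Encircles c (φ ∘ k₁) := by
  obtain ⟨K⟩ := hk
  obtain ⟨e, he, hlog⟩ := h
  obtain ⟨H, hH, hH0⟩ := exists_lift_toTorus (φ.comp K.toContinuousMap) e fun a => by simp [he]
  refine ⟨H.comp ⟨fun a => (1, a), by fun_prop⟩, fun a => by simp [hH], fun hlog₁ => hlog ?_⟩
  have hne : ∀ x, Complex.equivRealProdCLM.symm (H x - c) ≠ 0 := fun x h0 =>
    hφ (K x) (by
      rw [EmbeddingLike.map_eq_zero_iff, sub_eq_zero] at h0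
      exact (hH x).symm.trans (congrArg (toTorus p) h0))
  let G : C(unitInterval × A, {z : ℂ // z ≠ 0}) :=
    ⟨fun x => ⟨Complex.equivRealProdCLM.symm (H x - c), hne x⟩,
      (Complex.equivRealProdCLM.symm.continuous.comp (by fun_prop)).subtype_mk _⟩
  have hG : (G.comp ⟨fun a => (0, a), by fun_prop⟩).Homotopic
      (G.comp ⟨fun a => (1, a), by fun_prop⟩) := ⟨⟨G, fun _ => rfl, fun _ => rfl⟩⟩
  simpa [G, hH0] using hasContinuousLog_of_homotopic hG.symm hlog₁

lemma not_encircles_const [ConnectedSpace A] {c : ℝ × ℝ} {y : AddCircle p × AddCircle p}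
    (hy : y ≠ toTorus p c) : ¬ Encircles c fun _ : A => y := by
  rintro ⟨e, he, hlog⟩
  have cov := AddCircle.isCoveringMap_coe p
  obtain ⟨a₀⟩ : Nonempty A := inferInstance
  have hconst : ∀ a, e a = e a₀ := fun a => Prod.ext
    (cov.const_of_comp (g := fun a => (e a).1) (by fun_prop)
      (fun a a' => congrArg Prod.fst ((he a).trans (he a').symm)) a a₀)
    (cov.const_of_comp (g := fun a => (e a).2) (by fun_prop)
      (fun a a' => congrArg Prod.snd ((he a).trans (he a').symm)) a a₀)
  simp only [hconst] at hlog
  have hne : Complex.equivRealProdCLM.symm (e a₀ - c) ≠ 0 := by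
    rw [EmbeddingLike.map_ne_zero_iff, sub_ne_zero]
    exact fun h => hy ((he a₀).symm.trans (congrArg _ h))
  exact hlog (hasContinuousLog_of_mul_mem_slitPlane continuous_const (fun _ => by
    rw [inv_mul_cancel₀ hne]
    exact Complex.one_mem_slitPlane))

lemma not_encircles_of_nullhomotopic [ConnectedSpace A] {c : ℝ × ℝ}
    {φ : C(Y, AddCircle p × AddCircle p)} (hφ : ∀ y, φ y ≠ toTorus p c) {k : C(A, Y)}
    (hk : k.Nullhomotopic) : ¬ Encircles c (φ ∘ k) := fun h =>
  let ⟨y, hy⟩ := hk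
  not_encircles_const (hφ y) (h.of_homotopic hφ hy)

/-- A lift of `k` stays on one side of the vertical line through `s`; on the side of `c` it misses
the horizontal ray from `c` towards the line, so in both cases it misses a ray from `c`. -/
lemma not_encircles_of_ne [PreconnectedSpace A] {c : ℝ × ℝ} {s : ℝ} (hs : s ≤ c.1)
    {k : A → AddCircle p × AddCircle p} (hfib : ∀ a, (k a).1 ≠ s)
    (hseg : ∀ a, ∀ t ∈ Ioc s c.1, k a ≠ toTorus p (t, c.2)) : ¬ Encircles c k := by
  rintro ⟨e, he, hlog⟩
  have hg : Continuous fun a => Complex.equivRealProdCLM.symm (e a - c) :=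
    Complex.equivRealProdCLM.symm.continuous.comp (by fun_prop)
  have hre : ∀ a, (Complex.equivRealProdCLM.symm (e a - c)).re = (e a).1 - c.1 := fun _ => rfl
  have him : ∀ a, (Complex.equivRealProdCLM.symm (e a - c)).im = (e a).2 - c.2 := fun _ => rfl
  have hne : ∀ a, (e a).1 ≠ s := fun a h => hfib a (by rw [← he a, ← h]; rfl)
  have hside : (∀ a, s < (e a).1) ∨ ∀ a, (e a).1 < s := by
    by_contra! h
    obtain ⟨⟨a, ha⟩, a', ha'⟩ := h
    obtain ⟨b, hb⟩ := mem_range_of_exists_le_of_exists_ge (f := fun a => (e a).1) (by fun_prop)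
      ⟨a, ha⟩ ⟨a', ha'⟩
    exact hne b hb
  rcases hside with hright | hleft
  · refine hlog (hasContinuousLog_of_mul_mem_slitPlane hg (u := 1) fun a => ?_)
    rw [one_mul, Complex.mem_slitPlane_iff, hre, him]
    by_contra! h
    exact hseg a (e a).1 ⟨hright a, sub_nonpos.1 h.1⟩ (by rw [← he a, ← sub_eq_zero.1 h.2])
  · refine hlog (hasContinuousLog_of_mul_mem_slitPlane hg (u := -1) fun a => Or.inl ?_)
    rw [neg_one_mul, Complex.neg_re, hre, neg_sub, sub_pos]
    exact (hleft a).trans_le hs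

end Encircles

section Isotopy

variable {Z : Type*} [TopologicalSpace Z] {A B S : Set X}

lemma AmbIsotopicIn.refl (A S : Set X) : AmbIsotopicIn A A S :=
  ⟨fun _ => Homeomorph.refl X, continuous_snd, rfl, fun _ => image_id S, image_id A⟩

lemma AmbIsotopicIn.symm (h : AmbIsotopicIn A B S) : AmbIsotopicIn B A S := by
  obtain ⟨F, hF, hF0, hFS, hFA⟩ := h
  have hinvS : (F 1).symm '' S = S :=
    (congrArg _ (hFS 1)).symm.trans ((F 1).toEquiv.symm_image_image S)
  have hinvB : (F 1).symm '' B = A :=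
    (congrArg _ hFA).symm.trans ((F 1).toEquiv.symm_image_image A)
  refine ⟨fun t => (F 1).symm.trans (F (1 - t)), ?_, ?_, fun t => ?_, ?_⟩
  · exact hF.comp (f := fun q : ℝ × X => (1 - q.1, (F 1).symm q.2)) (by fun_prop)
  · simp
  · exact (image_comp (F (1 - t)) (F 1).symm S).trans (by rw [hinvS, hFS])
  · refine (image_comp (F (1 - 1)) (F 1).symm B).trans ?_
    rw [hinvB, sub_self, hF0]
    exact image_id A

lemma AmbIsotopicIn.compl (h : AmbIsotopicIn A B S) : AmbIsotopicIn Aᶜ Bᶜ S := by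
  obtain ⟨F, hF, hF0, hFS, hFA⟩ := h
  exact ⟨F, hF, hF0, hFS, by rw [image_compl_eq (F 1).bijective, hFA]⟩

lemma AmbIsotopicIn.exists_homotopic (h : AmbIsotopicIn A B S) (k : C(Z, S))
    (hk : ∀ z, (k z : X) ∈ A) : ∃ k' : C(Z, S), k.Homotopic k' ∧ ∀ z, (k' z : X) ∈ B := by
  obtain ⟨F, hF, hF0, hFS, hFA⟩ := h
  have hmem : ∀ (t : ℝ) (x : S), F t x ∈ S := fun t x => (hFS t).subset (mem_image_of_mem _ x.2)
  let H : C(unitInterval × Z, S) :=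
    ⟨fun q => ⟨F q.1 (k q.2), hmem _ _⟩,
      (hF.comp (f := fun q : unitInterval × Z => ((q.1 : ℝ), (k q.2 : X)))
        (by fun_prop)).subtype_mk _⟩
  exact ⟨H.comp ⟨fun z => (1, z), by fun_prop⟩,
    ⟨⟨H, fun z => Subtype.ext (by simp [H, hF0]), fun _ => rfl⟩⟩,
    fun z => hFA.subset (mem_image_of_mem _ (hk z))⟩

end Isotopy

section Disks

variable {γ Δ S U V W : Set X}

lemma circle1_subset_disk2 : Circle1 ⊆ Disk2 := sphere_subset_closedBall

instance : CompactSpace Disk2 := isCompact_iff_compactSpace.1 (isCompact_closedBall _ _)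

instance : ContractibleSpace Disk2 :=
  (convex_closedBall _ _).contractibleSpace (nonempty_closedBall.2 zero_le_one)

instance : ConnectedSpace Circle1 :=
  isConnected_iff_connectedSpace.1
    (isConnected_sphere (by rw [rank_prod']; norm_num [← one_add_one_eq_two]) 0 zero_le_one)

lemma IsProperDisk.boundsDiskIn (h : IsProperDisk Δ V S) : BoundsDiskIn (Δ ∩ S) V :=
  let ⟨f, hf, hinj, hΔ, hV, hγ, _⟩ := h
  ⟨f, hf, hinj, hΔ.trans_subset hV, hγ⟩

lemma IsProperDisk.isSCC (h : IsProperDisk Δ V S) : IsSCC (Δ ∩ S) :=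
  let ⟨f, hf, hinj, _, _, hγ, _⟩ := h
  ⟨f, hf.mono circle1_subset_disk2, hinj.mono circle1_subset_disk2, hγ⟩

lemma IsEssentialDisk.inDiskSet (h : IsEssentialDisk Δ V S) : InDiskSet (Δ ∩ S) V S :=
  ⟨_, Δ, .refl _ _, h, rfl⟩

lemma IsEssentialDisk.isVertex (h : IsEssentialDisk Δ V S) (W : Set X) :
    IsVertex (Δ ∩ S) V W S :=
  ⟨h.1.isSCC, inter_subset_right, h.2, Or.inl h.inDiskSet⟩

lemma IsVertex.symm (h : IsVertex γ V W S) : IsVertex γ W V S :=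
  let ⟨hγ, hS, hess, hVW⟩ := h
  ⟨hγ, hS, hess, hVW.symm⟩

lemma nullhomotopic_of_range_subset {Y Z : Type*} [TopologicalSpace Y] [TopologicalSpace Z]
    [CompactSpace Y] [ContractibleSpace Y] [T2Space X] {g : C(Y, X)} (hg : Function.Injective g)
    {k : C(Z, X)} (hk : range k ⊆ range g) : k.Nullhomotopic := by
  have hemb : IsEmbedding g := (g.continuous.isClosedEmbedding hg).isEmbedding
  choose m hm using fun z : Z => hk (mem_range_self z)
  have hmc : Continuous m := hemb.continuous_iff.2 (k.continuous.congr fun z => (hm z).symm)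
  have hfac : k = (g.comp (ContinuousMap.id Y)).comp ⟨m, hmc⟩ :=
    ContinuousMap.ext fun z => (hm z).symm
  rw [hfac]
  exact ((id_nullhomotopic Y).comp_right g).comp_left ⟨m, hmc⟩

lemma BoundsDiskIn.nullhomotopic {Z : Type*} [TopologicalSpace Z] [T2Space X]
    (h : BoundsDiskIn γ U) {k : C(Z, U)} (hk : ∀ z, (k z : X) ∈ γ) : k.Nullhomotopic := by
  obtain ⟨f, hf, hinj, hU, rfl⟩ := h
  let g : C(Disk2, U) :=
    ⟨fun x => ⟨f x, hU (mem_image_of_mem f x.2)⟩,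
      (continuousOn_iff_continuous_domRestrict.1 hf).subtype_mk _⟩
  have hg : Function.Injective g := fun x y hxy =>
    Subtype.ext (hinj x.2 y.2 (congrArg Subtype.val hxy))
  refine nullhomotopic_of_range_subset hg ?_
  rintro _ ⟨z, rfl⟩
  obtain ⟨x, hx, hxz⟩ := hk z
  exact ⟨⟨x, circle1_subset_disk2 hx⟩, Subtype.ext hxz⟩

end Disks

section FlatDisk

variable {p r s : ℝ} {c : ℝ × ℝ} {φ : C(X, AddCircle p × AddCircle p)} {γ δ Δ S U V : Set X}

/-- `Δ` is a copy in `X` of the flat square of side `2r` centred at `c` in the torus `ℝ²/(pℤ)²`,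
embedded by a section of `φ` so that exactly its boundary lies on `S`. -/
def IsFlatDisk (φ : C(X, AddCircle p × AddCircle p)) (c : ℝ × ℝ) (r : ℝ) (Δ S : Set X) : Prop :=
  0 < r ∧ r < p / 2 ∧ ∃ ι : C(AddCircle p × AddCircle p, X), Function.LeftInverse φ ι ∧
    ι '' closedBall (toTorus p c) r = Δ ∧ ι '' sphere (toTorus p c) r = Δ ∩ S

lemma IsFlatDisk.of_preimage {ι : C(AddCircle p × AddCircle p, X)} (hr : 0 < r) (hrp : r < p / 2)
    (hι : Function.LeftInverse φ ι) (hΔι : Δ ⊆ range ι) (hΔ : ι ⁻¹' Δ = closedBall (toTorus p c) r)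
    (hS : ι ⁻¹' (Δ ∩ S) = sphere (toTorus p c) r) : IsFlatDisk φ c r Δ S :=
  ⟨hr, hrp, ι, hι, hΔ ▸ image_preimage_eq_of_subset hΔι,
    hS ▸ image_preimage_eq_of_subset (inter_subset_left.trans hΔι)⟩

lemma IsFlatDisk.isProperDisk (h : IsFlatDisk φ c r Δ S) (hΔV : Δ ⊆ V) : IsProperDisk Δ V S := by
  obtain ⟨hr, hrp, ι, hι, hΔ, hγ⟩ := h
  rw [← flatSquare_image_disk2 c hr hrp.le, ← image_comp] at hΔ
  rw [← flatSquare_image_circle1 c hr hrp.le, ← image_comp] at hγ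
  have hinj : InjOn (ι ∘ flatSquare p c r) Disk2 :=
    hι.injective.comp_injOn (flatSquare_injOn_disk2 c hr hrp)
  refine ⟨ι ∘ flatSquare p c r, by fun_prop, hinj, hΔ, hΔV, hγ, ?_⟩
  rintro _ ⟨x, ⟨hx, hx'⟩, rfl⟩
  have hxΔ := hΔ ▸ mem_image_of_mem (ι ∘ flatSquare p c r) hx
  refine ⟨hΔV hxΔ, fun hxS => hx' ?_⟩
  obtain ⟨y, hy, hxy⟩ := hγ.ge ⟨hxΔ, hxS⟩
  rwa [← hinj (circle1_subset_disk2 hy) hx hxy]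

lemma IsFlatDisk.exists_loop (h : IsFlatDisk φ c r Δ S) :
    ∃ k : C(Circle1, S), (∀ x, (k x : X) ∈ Δ) ∧ Encircles c fun x => φ (k x) := by
  obtain ⟨hr, hrp, ι, hι, -, hγ⟩ := h
  rw [← flatSquare_image_circle1 c hr hrp.le, ← image_comp] at hγ
  have hmem : ∀ x : Circle1, ι (flatSquare p c r x) ∈ Δ ∩ S := fun x =>
    hγ ▸ mem_image_of_mem (ι ∘ flatSquare p c r) x.2
  refine ⟨⟨fun x => ⟨ι (flatSquare p c r x), (hmem x).2⟩, by fun_prop⟩, fun x => (hmem x).1, ?_⟩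
  simpa only [ContinuousMap.coe_mk, hι _] using encircles_flatSquare c hr

lemma IsFlatDisk.not_boundsDiskIn [T2Space X] (h : IsFlatDisk φ c r Δ S)
    (hφ : ∀ x ∈ U, φ x ≠ toTorus p c) (hSU : S ⊆ U) (hγ : AmbIsotopicIn (Δ ∩ S) γ S) :
    ¬ BoundsDiskIn γ U := by
  obtain ⟨k, hkΔ, henc⟩ := h.exists_loop
  obtain ⟨k', hkk', hkγ⟩ := hγ.exists_homotopic k fun x => ⟨hkΔ x, (k x).2⟩
  intro hdisk
  let j : C(S, U) := ⟨inclusion hSU, continuous_inclusion hSU⟩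
  have hnull : (j.comp k').Nullhomotopic := hdisk.nullhomotopic hkγ
  let φU : C(U, AddCircle p × AddCircle p) := φ.restrict U
  have hφU : ∀ x : U, φU x ≠ toTorus p c := fun x => hφ x x.2
  exact not_encircles_of_nullhomotopic hφU hnull
    (Encircles.of_homotopic hφU ((ContinuousMap.Homotopic.refl j).comp hkk') henc)

lemma IsFlatDisk.isEssentialDisk [T2Space X] (h : IsFlatDisk φ c r Δ S) (hΔV : Δ ⊆ V)
    (hφ : ∀ x ∈ S, φ x ≠ toTorus p c) : IsEssentialDisk Δ V S :=
  ⟨h.isProperDisk hΔV, h.not_boundsDiskIn hφ Subset.rfl (.refl _ _)⟩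

/-- If `γ` missed `Δ`, the inverse isotopy would push `∂Δ` off the fibre over the line through `s`,
while its projection keeps away from `c`. -/
lemma IsFlatDisk.not_disjoint_of_ambIsotopicIn (h : IsFlatDisk φ c r Δ S) (hs : s ≤ c.1)
    (hφ : ∀ x ∈ S, ∀ t ∈ Icc s c.1, φ x ≠ toTorus p (t, c.2))
    (hδ : ∀ x ∈ S, (φ x).1 = s → x ∈ δ) (hγ : AmbIsotopicIn δ γ S) : ¬ Disjoint Δ γ := by
  intro hdisj
  obtain ⟨k, hkΔ, henc⟩ := h.exists_loop
  obtain ⟨k', hkk', hkδ⟩ := hγ.symm.compl.exists_homotopic k fun x =>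
    disjoint_left.1 hdisj (hkΔ x)
  have hφS : ∀ x : S, φ.restrict S x ≠ toTorus p c := fun x => hφ x x.2 c.1 ⟨hs, le_rfl⟩
  exact not_encircles_of_ne hs (fun x hx => hkδ x (hδ _ (k' x).2 hx))
    (fun x t ht => hφ _ (k' x).2 t (Ioc_subset_Icc_self ht))
    (Encircles.of_homotopic hφS hkk' henc)

end FlatDisk

section TwoOfThree

variable {Y : Type*} {K L : Set Y}

/-- The points of `Y³` with at least two coordinates in `K`. The axes, both handlebodies of the
splitting and their common boundary are described by sets of this form. -/
def twoOfThree (K : Set Y) : Set (Y × Y × Y) :=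
  univ ×ˢ K ×ˢ K ∪ K ×ˢ univ ×ˢ K ∪ K ×ˢ K ×ˢ univ

lemma mem_twoOfThree {q : Y × Y × Y} : q ∈ twoOfThree K ↔
    (q.2.1 ∈ K ∧ q.2.2 ∈ K ∨ q.1 ∈ K ∧ q.2.2 ∈ K) ∨ q.1 ∈ K ∧ q.2.1 ∈ K := by
  simp [twoOfThree]

lemma compl_twoOfThree (K : Set Y) : (twoOfThree K)ᶜ = twoOfThree Kᶜ := by
  ext q
  simp only [mem_compl_iff, mem_twoOfThree]
  tauto

lemma closure_twoOfThree [TopologicalSpace Y] (K : Set Y) :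
    closure (twoOfThree K) = twoOfThree (closure K) := by
  simp only [twoOfThree, closure_union, closure_prod_eq, closure_univ]

lemma cthickening_prod {Z : Type*} [PseudoEMetricSpace Y] [PseudoEMetricSpace Z] (ε : ℝ)
    (s : Set Y) (t : Set Z) : cthickening ε (s ×ˢ t) = cthickening ε s ×ˢ cthickening ε t := by
  ext q
  simp only [mem_cthickening_iff, infEDist_prod, max_le_iff, mem_prod]

lemma cthickening_twoOfThree [PseudoEMetricSpace Y] (ε : ℝ) (K : Set Y) :
    cthickening ε (twoOfThree K) = twoOfThree (cthickening ε K) := by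
  have huniv : cthickening ε (univ : Set Y) = univ :=
    eq_univ_of_univ_subset (self_subset_cthickening univ)
  simp only [twoOfThree, cthickening_union, cthickening_prod, huniv]

lemma fst_snd_fst_ne_of_mem_twoOfThree {q : Y × Y × Y} {a b : Y} (hq : q ∈ twoOfThree K)
    (ha : a ∉ K) (hb : b ∉ K) : (q.1, q.2.1) ≠ (a, b) := by
  rintro h
  obtain ⟨rfl, rfl⟩ := Prod.mk.inj h
  have := mem_twoOfThree.1 hq
  tauto

lemma snd_ne_of_mem_twoOfThree {q : Y × Y × Y} {a b : Y} (hq : q ∈ twoOfThree K)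
    (ha : a ∉ K) (hb : b ∉ K) : q.2 ≠ (a, b) := by
  rintro h
  have := mem_twoOfThree.1 hq
  rw [h] at this
  tauto

end TwoOfThree

section Slice

variable {p c r : ℝ} {h : AddCircle p} {L : Set (AddCircle p)}

/-- The projection of `Y³` to its first two factors. -/
def projXY (Y : Type*) [TopologicalSpace Y] : C(Y × Y × Y, Y × Y) :=
  ⟨fun q => (q.1, q.2.1), by fun_prop⟩

lemma mem_closedBall_toTorus_diag_iff {x y : AddCircle p} :
    (x, y) ∈ closedBall (toTorus p (c, c)) r ↔
      x ∈ closedBall (c : AddCircle p) r ∧ y ∈ closedBall (c : AddCircle p) r := by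
  change (x, y) ∈ closedBall ((c : AddCircle p), (c : AddCircle p)) r ↔ _
  rw [← closedBall_prod_same, mem_prod]

lemma mem_sphere_toTorus_diag_iff (hL : closedBall (c : AddCircle p) r ∩ L = sphere ↑c r)
    {x y : AddCircle p} : (x, y) ∈ sphere (toTorus p (c, c)) r ↔
      (x ∈ closedBall (c : AddCircle p) r ∧ y ∈ closedBall (c : AddCircle p) r) ∧
        (x ∈ L ∨ y ∈ L) := by
  rw [sphere_prod]
  change (x ∈ sphere (c : AddCircle p) r ∧ y ∈ closedBall (c : AddCircle p) r ∨
    x ∈ closedBall (c : AddCircle p) r ∧ y ∈ sphere (c : AddCircle p) r) ↔ _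
  rw [← hL, mem_inter_iff, mem_inter_iff]
  tauto

lemma isFlatDisk_slice_z (hr : 0 < r) (hrp : r < p / 2) (hK : h ∉ closedBall (c : AddCircle p) r)
    (hhL : h ∈ L) (hL : closedBall (c : AddCircle p) r ∩ L = sphere ↑c r) :
    IsFlatDisk (projXY (AddCircle p)) (c, c) r
      ({q | q.2.2 = h} ∩ twoOfThree (closedBall ↑c r))
      (twoOfThree (closedBall ↑c r) ∩ twoOfThree L) := by
  refine .of_preimage (ι := ⟨fun y => (y.1, y.2, h), by fun_prop⟩) hr hrp (fun _ => rfl) ?_ ?_ ?_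
  · rintro ⟨x, y, z⟩ ⟨rfl, -⟩
    exact ⟨(x, y), rfl⟩
  all_goals
    ext ⟨x, y⟩
    simp only [mem_preimage, ContinuousMap.coe_mk, mem_inter_iff, mem_ofPred_eq, mem_twoOfThree,
      mem_closedBall_toTorus_diag_iff, mem_sphere_toTorus_diag_iff hL]
    tauto

lemma isFlatDisk_slice_x (hr : 0 < r) (hrp : r < p / 2) (hK : h ∉ closedBall (c : AddCircle p) r)
    (hhL : h ∈ L) (hL : closedBall (c : AddCircle p) r ∩ L = sphere ↑c r) :
    IsFlatDisk ContinuousMap.snd (c, c) r ({q | q.1 = h} ∩ twoOfThree (closedBall ↑c r))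
      (twoOfThree (closedBall ↑c r) ∩ twoOfThree L) := by
  refine .of_preimage (ι := ⟨fun y => (h, y), by fun_prop⟩) hr hrp (fun _ => rfl) ?_ ?_ ?_
  · rintro ⟨x, y, z⟩ ⟨rfl, -⟩
    exact ⟨(y, z), rfl⟩
  all_goals
    ext ⟨y, z⟩
    simp only [mem_preimage, ContinuousMap.coe_mk, mem_inter_iff, mem_ofPred_eq, mem_twoOfThree,
      mem_closedBall_toTorus_diag_iff, mem_sphere_toTorus_diag_iff hL]
    tauto

end Slice

section Splitting

/-- The arc of the circle factor of `T3` in which a coordinate is small: `V` consists of the points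
with at least two coordinates in this arc. -/
def coreArc : Set (AddCircle (2 : ℝ)) := closedBall ((0 : ℝ) : AddCircle (2 : ℝ)) (1 / 4)

/-- The closed complementary arc of `coreArc`, centred at the point opposite to `0`: `W` consists of
the points with at least two coordinates in this arc. -/
def dualArc : Set (AddCircle (2 : ℝ)) := closedBall ((1 : ℝ) : AddCircle (2 : ℝ)) (3 / 4)

lemma dist_coe_one (y : AddCircle (2 : ℝ)) :
    dist y ((1 : ℝ) : AddCircle (2 : ℝ)) = 1 - dist y ((0 : ℝ) : AddCircle (2 : ℝ)) := by
  simpa using dist_half_period two_pos y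

lemma coe_mem_coreArc_iff {x : ℝ} (hx : |x| ≤ 1) :
    (x : AddCircle (2 : ℝ)) ∈ coreArc ↔ |x| ≤ 1 / 4 := by
  have hdist : dist x 0 ≤ 2 / 2 := by simpa
  rw [coreArc, mem_closedBall, dist_coe_addCircle two_pos hdist, Real.dist_0_eq_abs]

lemma coe_mem_dualArc_iff {x : ℝ} (hx : |x| ≤ 1) :
    (x : AddCircle (2 : ℝ)) ∈ dualArc ↔ 1 / 4 ≤ |x| := by
  have hdist : dist x 0 ≤ 2 / 2 := by simpa
  rw [dualArc, mem_closedBall, dist_coe_one, dist_coe_addCircle two_pos hdist, Real.dist_0_eq_abs]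
  constructor <;> intro h <;> linarith

lemma coreArc_eq_coe_image :
    coreArc = ((↑) : ℝ → AddCircle (2 : ℝ)) '' (closedBall 0 (1 / 4) ∩ Icc (-1) 1) := by
  ext y
  constructor
  · intro hy
    obtain ⟨x, rfl, hx⟩ := exists_coe_addCircle_eq_dist_eq 0 y
    have hx4 : |x| ≤ 1 / 4 := by rw [← Real.dist_0_eq_abs, hx]; exact hy
    exact ⟨x, ⟨by simpa using hx4, abs_le.1 (by linarith)⟩, rfl⟩
  · rintro ⟨x, ⟨hx, hx1⟩, rfl⟩
    exact (coe_mem_coreArc_iff (abs_le.2 hx1)).2 (by simpa using hx)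

lemma closure_compl_coreArc : closure coreArcᶜ = dualArc := by
  have hcompl : coreArcᶜ = ball ((1 : ℝ) : AddCircle (2 : ℝ)) (3 / 4) := by
    ext y
    rw [coreArc, mem_compl_iff, mem_closedBall, mem_ball, dist_coe_one, not_le]
    constructor <;> intro h <;> linarith
  rw [hcompl, closure_ball_addCircle _ (by norm_num), dualArc]

lemma coreArc_inter_dualArc :
    coreArc ∩ dualArc = sphere ((0 : ℝ) : AddCircle (2 : ℝ)) (1 / 4) := by
  ext y
  rw [mem_inter_iff, coreArc, dualArc, mem_closedBall, mem_closedBall, mem_sphere, dist_coe_one,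
    le_antisymm_iff]
  exact and_congr_right fun _ => by constructor <;> intro h <;> linarith

lemma dualArc_inter_coreArc :
    dualArc ∩ coreArc = sphere ((1 : ℝ) : AddCircle (2 : ℝ)) (3 / 4) := by
  ext y
  rw [mem_inter_iff, coreArc, dualArc, mem_closedBall, mem_closedBall, mem_sphere, dist_coe_one,
    le_antisymm_iff]
  exact and_congr_right fun _ => by constructor <;> intro h <;> linarith

lemma axes_eq_twoOfThree : Axes = twoOfThree {0} := by
  ext q
  rw [mem_twoOfThree]
  rfl

lemma coe_image_Icc : ((↑) : ℝ → AddCircle (2 : ℝ)) '' Icc (-1) 1 = univ := by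
  have : Fact ((0 : ℝ) < 2) := ⟨two_pos⟩
  rw [← AddCircle.coe_image_Icc_eq (2 : ℝ) (-1), show (-1 : ℝ) + 2 = 1 by norm_num]

lemma qT_image_prod_inter_cube (A B C : Set ℝ) :
    qT '' (A ×ˢ B ×ˢ C ∩ Cube) = (((↑) : ℝ → AddCircle (2 : ℝ)) '' (A ∩ Icc (-1) 1)) ×ˢ
      (((↑) : ℝ → AddCircle (2 : ℝ)) '' (B ∩ Icc (-1) 1)) ×ˢ
        (((↑) : ℝ → AddCircle (2 : ℝ)) '' (C ∩ Icc (-1) 1)) := by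
  let π : ℝ → AddCircle (2 : ℝ) := (↑)
  change Prod.map π (Prod.map π π) ''
    (A ×ˢ B ×ˢ C ∩ Icc (-1) 1 ×ˢ Icc (-1) 1 ×ˢ Icc (-1) 1) = _
  rw [prod_inter_prod, prod_inter_prod, prodMap_image_prod, prodMap_image_prod]

lemma qT_image_twoOfThree_inter_cube (K : Set ℝ) : qT '' (twoOfThree K ∩ Cube) =
    twoOfThree (((↑) : ℝ → AddCircle (2 : ℝ)) '' (K ∩ Icc (-1) 1)) := by
  simp only [twoOfThree, union_inter_distrib_right, image_union, qT_image_prod_inter_cube,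
    univ_inter, coe_image_Icc]

lemma qT_image_slice_x {h : ℝ} (hh : h ∈ Icc (-1 : ℝ) 1) :
    qT '' ({p | p.1 = h} ∩ Cube) = {q | q.1 = (h : AddCircle (2 : ℝ))} := by
  have hslice : {p : ℝ × ℝ × ℝ | p.1 = h} = {h} ×ˢ univ ×ˢ univ := by ext; simp
  rw [hslice, qT_image_prod_inter_cube, univ_inter, coe_image_Icc, singleton_inter_of_mem hh]
  ext
  simp

lemma qT_image_slice_z {h : ℝ} (hh : h ∈ Icc (-1 : ℝ) 1) :
    qT '' ({p | p.2.2 = h} ∩ Cube) = {q | q.2.2 = (h : AddCircle (2 : ℝ))} := by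
  have hslice : {p : ℝ × ℝ × ℝ | p.2.2 = h} = univ ×ˢ univ ×ˢ {h} := by ext; simp
  rw [hslice, qT_image_prod_inter_cube, univ_inter, coe_image_Icc, singleton_inter_of_mem hh]
  ext
  simp

lemma vh_eq_twoOfThree : Vh = twoOfThree coreArc := by
  rw [Vh, axes_eq_twoOfThree, cthickening_twoOfThree, cthickening_singleton _ (by norm_num),
    qT_image_twoOfThree_inter_cube, coreArc_eq_coe_image]

lemma wh_eq_twoOfThree : Wh = twoOfThree dualArc := by
  rw [Wh, vh_eq_twoOfThree, compl_twoOfThree, closure_twoOfThree, closure_compl_coreArc]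

lemma sh_eq_inter : Sh = Vh ∩ Wh := by
  have hV : IsClosed Vh := by
    rw [← closure_eq_iff_isClosed, vh_eq_twoOfThree, closure_twoOfThree, coreArc,
      isClosed_closedBall.closure_eq]
  rw [Sh, frontier_eq_closure_inter_closure, hV.closure_eq, Wh]

end Splitting

section Meridians

lemma dd_eq : Dd = {q | q.2.2 = ((1 / 2 : ℝ) : AddCircle (2 : ℝ))} ∩ Vh := by
  rw [Dd, qT_image_slice_z (by norm_num)]

lemma ee_eq : Ee = {q | q.2.2 = ((0 : ℝ) : AddCircle (2 : ℝ))} ∩ Wh := by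
  rw [Ee, qT_image_slice_z (by norm_num)]

lemma dd'_eq : Dd' = {q | q.1 = ((1 / 2 : ℝ) : AddCircle (2 : ℝ))} ∩ Vh := by
  rw [Dd', qT_image_slice_x (by norm_num)]

lemma ee'_eq : Ee' = {q | q.1 = ((0 : ℝ) : AddCircle (2 : ℝ))} ∩ Wh := by
  rw [Ee', qT_image_slice_x (by norm_num)]

lemma coe_notMem_coreArc {x : ℝ} (hx : x ∈ Icc (1 / 2) 1) : (x : AddCircle (2 : ℝ)) ∉ coreArc := by
  have hx0 : |x| = x := abs_of_nonneg (by linarith [hx.1])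
  rw [coe_mem_coreArc_iff (hx0.trans_le hx.2), hx0]
  linarith [hx.1]

lemma coe_zero_notMem_dualArc : ((0 : ℝ) : AddCircle (2 : ℝ)) ∉ dualArc := by
  rw [coe_mem_dualArc_iff (by norm_num)]
  norm_num

lemma isFlatDisk_dd : IsFlatDisk (projXY (AddCircle (2 : ℝ))) (0, 0) (1 / 4) Dd Sh := by
  rw [dd_eq, sh_eq_inter, vh_eq_twoOfThree, wh_eq_twoOfThree]
  exact isFlatDisk_slice_z (by norm_num) (by norm_num) (coe_notMem_coreArc (by norm_num))
    ((coe_mem_dualArc_iff (by norm_num)).2 (by norm_num)) coreArc_inter_dualArc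

lemma isFlatDisk_dd' :
    IsFlatDisk (ContinuousMap.snd (α := AddCircle (2 : ℝ))) (0, 0) (1 / 4) Dd' Sh := by
  rw [dd'_eq, sh_eq_inter, vh_eq_twoOfThree, wh_eq_twoOfThree]
  exact isFlatDisk_slice_x (by norm_num) (by norm_num) (coe_notMem_coreArc (by norm_num))
    ((coe_mem_dualArc_iff (by norm_num)).2 (by norm_num)) coreArc_inter_dualArc

lemma isFlatDisk_ee : IsFlatDisk (projXY (AddCircle (2 : ℝ))) (1, 1) (3 / 4) Ee Sh := by
  rw [ee_eq, sh_eq_inter, inter_comm Vh, vh_eq_twoOfThree, wh_eq_twoOfThree]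
  exact isFlatDisk_slice_z (by norm_num) (by norm_num) coe_zero_notMem_dualArc
    ((coe_mem_coreArc_iff (by norm_num)).2 (by norm_num)) dualArc_inter_coreArc

lemma isFlatDisk_ee' :
    IsFlatDisk (ContinuousMap.snd (α := AddCircle (2 : ℝ))) (1, 1) (3 / 4) Ee' Sh := by
  rw [ee'_eq, sh_eq_inter, inter_comm Vh, vh_eq_twoOfThree, wh_eq_twoOfThree]
  exact isFlatDisk_slice_x (by norm_num) (by norm_num) coe_zero_notMem_dualArc
    ((coe_mem_coreArc_iff (by norm_num)).2 (by norm_num)) dualArc_inter_coreArc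

lemma sh_subset_vh : Sh ⊆ Vh := sh_eq_inter ▸ inter_subset_left

lemma sh_subset_wh : Sh ⊆ Wh := sh_eq_inter ▸ inter_subset_right

lemma projXY_ne_of_mem_vh {q : T3} (hq : q ∈ Vh) {t : ℝ} (ht : t ∈ Icc (1 / 2) 1) :
    projXY (AddCircle 2) q ≠ toTorus 2 (t, 1) :=
  fst_snd_fst_ne_of_mem_twoOfThree (vh_eq_twoOfThree ▸ hq) (coe_notMem_coreArc ht)
    (coe_notMem_coreArc (by norm_num))

lemma snd_ne_of_mem_vh {q : T3} (hq : q ∈ Vh) : q.2 ≠ toTorus 2 (1, 1) :=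
  snd_ne_of_mem_twoOfThree (vh_eq_twoOfThree ▸ hq) (coe_notMem_coreArc (by norm_num))
    (coe_notMem_coreArc (by norm_num))

lemma projXY_ne_of_mem_wh {q : T3} (hq : q ∈ Wh) : projXY (AddCircle 2) q ≠ toTorus 2 (0, 0) :=
  fst_snd_fst_ne_of_mem_twoOfThree (wh_eq_twoOfThree ▸ hq) coe_zero_notMem_dualArc
    coe_zero_notMem_dualArc

lemma snd_ne_of_mem_wh {q : T3} (hq : q ∈ Wh) : q.2 ≠ toTorus 2 (0, 0) :=
  snd_ne_of_mem_twoOfThree (wh_eq_twoOfThree ▸ hq) coe_zero_notMem_dualArc coe_zero_notMem_dualArc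

lemma isEssentialDisk_dd : IsEssentialDisk Dd Vh Sh :=
  isFlatDisk_dd.isEssentialDisk inter_subset_right fun _ hq => projXY_ne_of_mem_wh (sh_subset_wh hq)

lemma isEssentialDisk_dd' : IsEssentialDisk Dd' Vh Sh :=
  isFlatDisk_dd'.isEssentialDisk inter_subset_right fun _ hq => snd_ne_of_mem_wh (sh_subset_wh hq)

lemma isEssentialDisk_ee : IsEssentialDisk Ee Wh Sh :=
  isFlatDisk_ee.isEssentialDisk inter_subset_right fun _ hq =>
    projXY_ne_of_mem_vh (sh_subset_vh hq) (by norm_num)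

lemma isEssentialDisk_ee' : IsEssentialDisk Ee' Wh Sh :=
  isFlatDisk_ee'.isEssentialDisk inter_subset_right fun _ hq => snd_ne_of_mem_vh (sh_subset_vh hq)

lemma coe_half_ne_coe_zero :
    ((1 / 2 : ℝ) : AddCircle (2 : ℝ)) ≠ ((0 : ℝ) : AddCircle (2 : ℝ)) := by
  rw [Ne, coe_addCircle_eq_coe_iff_of_dist_lt (by norm_num)]
  norm_num

lemma disjoint_dd_ee : Disjoint Dd Ee := by
  rw [dd_eq, ee_eq, disjoint_left]
  exact fun q hD hE => coe_half_ne_coe_zero (hD.1.symm.trans hE.1)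

lemma disjoint_dd'_ee' : Disjoint Dd' Ee' := by
  rw [dd'_eq, ee'_eq, disjoint_left]
  exact fun q hD hE => coe_half_ne_coe_zero (hD.1.symm.trans hE.1)

lemma not_vertexInC0V_dd' : ¬ VertexInC0V (Dd' ∩ Sh) := by
  rintro ⟨_, Δ, hiso, -, rfl, hdisj⟩
  refine isFlatDisk_ee.not_disjoint_of_ambIsotopicIn (s := 1 / 2) (by norm_num)
    (fun q hq t ht => projXY_ne_of_mem_vh (sh_subset_vh hq) ht) (fun q hq hx => ?_) hiso
    (hdisj.symm.mono_right inter_subset_left)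
  exact ⟨dd'_eq ▸ ⟨hx, sh_subset_vh hq⟩, hq⟩

lemma not_vertexInC0W_dd' : ¬ VertexInC0W (Dd' ∩ Sh) := by
  rintro ⟨_, Δ, hiso, hΔ, rfl, -⟩
  exact isFlatDisk_dd'.not_boundsDiskIn (fun _ => snd_ne_of_mem_wh) sh_subset_wh hiso
    hΔ.1.boundsDiskIn

lemma not_vertexInC0V_ee' : ¬ VertexInC0V (Ee' ∩ Sh) := by
  rintro ⟨_, Δ, hiso, hΔ, rfl, -⟩
  exact isFlatDisk_ee'.not_boundsDiskIn (fun _ => snd_ne_of_mem_vh) sh_subset_vh hiso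
    hΔ.1.boundsDiskIn

lemma not_vertexInC0W_ee' : ¬ VertexInC0W (Ee' ∩ Sh) := by
  rintro ⟨_, Δ, hiso, -, rfl, hdisj⟩
  refine isFlatDisk_dd.not_disjoint_of_ambIsotopicIn (s := 0) le_rfl (fun q hq t ht => ?_)
    (fun q hq hx => ?_) hiso (hdisj.symm.mono_right inter_subset_left)
  · obtain rfl : t = 0 := le_antisymm ht.2 ht.1
    exact projXY_ne_of_mem_wh (sh_subset_wh hq)
  · exact ⟨ee'_eq ▸ ⟨hx, sh_subset_wh hq⟩, hq⟩

end Meridians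

/-- For the partition `C₀ ⊔ C₁` of the vertices of the disk complex,
`D ∈ D_V(S) ∩ C₀` and `E ∈ D_W(S) ∩ C₀` with `D ∩ E = ∅`, and `D' ∈ D_V(S) ∩ C₁` and
`E' ∈ D_W(S) ∩ C₁` with `D' ∩ E' = ∅`. -/
theorem partition_satisfies_first_condition :
    (Dd ∩ Sh) ∈ DVC0 ∧ (Ee ∩ Sh) ∈ DWC0 ∧ Dd ∩ Ee = ∅ ∧
    (Dd' ∩ Sh) ∈ DVC1 ∧ (Ee' ∩ Sh) ∈ DWC1 ∧ Dd' ∩ Ee' = ∅ := by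
  have hD := isEssentialDisk_dd
  have hE := isEssentialDisk_ee
  have hD' := isEssentialDisk_dd'
  have hE' := isEssentialDisk_ee'
  refine ⟨⟨⟨hD.isVertex Wh, Or.inl ?_⟩, hD.inDiskSet⟩,
    ⟨⟨(hE.isVertex Vh).symm, Or.inr ?_⟩, hE.inDiskSet⟩, disjoint_dd_ee.inter_eq,
    ⟨⟨hD'.isVertex Wh, ?_⟩, hD'.inDiskSet⟩,
    ⟨⟨(hE'.isVertex Vh).symm, ?_⟩, hE'.inDiskSet⟩, disjoint_dd'_ee'.inter_eq⟩
  · exact ⟨_, Dd, .refl _ _, hD, rfl, disjoint_dd_ee⟩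
  · exact ⟨_, Ee, .refl _ _, hE, rfl, disjoint_dd_ee.symm⟩
  · exact not_or.2 ⟨not_vertexInC0V_dd', not_vertexInC0W_dd'⟩
  · exact not_or.2 ⟨not_vertexInC0V_ee', not_vertexInC0W_ee'⟩

end
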